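/- For every positive integer n that is not of the form T(k)+1 for a triangular number T(k) = k(k+1)/2, one has C₃(n) = D₃(n)/3, i.e., 3·C₃(n) = D₃(n). -/

import Mathlib

/-- `Cm m n`: number of partitions of `n` whose largest part is divisible by `m`,
say `m*j`, with all parts `≤ j` occurring fewer than `m` times; `Cm m 0 = 1`. -/
noncomputable def Cm (m n : ℕ) : ℕ :=
  if n = 0 then 1 else
  Nat.card {s : Multiset ℕ // s.sum = n ∧ (∀ a ∈ s, 0 < a) ∧
    ∃ j : ℕ, m * j ∈ s ∧ (∀ b ∈ s, b ≤ m * j) ∧ ∀ b ∈ s, b ≤ j → s.count b < m}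

/-- `Dm m n`: number of partitions of `n` into nonnegative parts (0 allowed) whose
smallest part occurs exactly `m` times and every other part occurs fewer than `m` times. -/
noncomputable def Dm (m n : ℕ) : ℕ :=
  Nat.card {s : Multiset ℕ // s.sum = n ∧
    ∃ a ∈ s, s.count a = m ∧ (∀ b ∈ s, a ≤ b) ∧ ∀ b ∈ s, b ≠ a → s.count b < m}

open Finset

section ringside
variable {R : Type*} [CommRing R]

lemma pw0 {q : R} {L : ℕ} (hq : q ^ L = 0) {k : ℕ} (h : L ≤ k) : q ^ k = 0 :=
  pow_eq_zero_of_le h hq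

/-- truncated `(x q^k; q^s)_∞` -/
def Pr (q : R) (L : ℕ) (x : R) (s k : ℕ) : R := ∏ i ∈ range L, (1 - x * q ^ (k + s * i))

/-- truncated `1/(1-q^i)` -/
def gg (q : R) (L i : ℕ) : R := ∑ m ∈ range L, q ^ (i * m)

/-- truncated `1/(q^s;q^s)_a` -/
def HH (q : R) (L s a : ℕ) : R := ∏ i ∈ range a, gg q L (s * (i + 1))

def EE (q : R) (L : ℕ) (x : R) (s k : ℕ) : R :=
  ∑ a ∈ range L, x ^ a * q ^ (k * a) * HH q L s a

lemma Pr_step {q : R} {L : ℕ} (hq : q ^ L = 0) (x : R) {s : ℕ} (hs : 1 ≤ s) (k : ℕ) :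
    Pr q L x s k = (1 - x * q ^ k) * Pr q L x s (k + s) := by
  have h1 := prod_range_succ (fun i => 1 - x * q ^ (k + s * i)) L
  have h2 := prod_range_succ' (fun i => 1 - x * q ^ (k + s * i)) L
  have h3 : q ^ (k + s * L) = 0 := pw0 hq (by nlinarith)
  simp only [h3, mul_zero, sub_zero, mul_one] at h1
  unfold Pr
  rw [← h1, h2, mul_comm]
  simp only [mul_zero, add_zero]
  congr 1
  apply prod_congr rfl
  intro i _
  congr 3
  ring

lemma Pr_big {q : R} {L : ℕ} (hq : q ^ L = 0) (x : R) (s : ℕ) {k : ℕ} (hk : L ≤ k) :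
    Pr q L x s k = 1 := by
  unfold Pr
  apply prod_eq_one
  intro i _
  rw [pw0 hq (by omega)]; simp

lemma gg_mul {q : R} {L : ℕ} (hq : q ^ L = 0) {i : ℕ} (hi : 1 ≤ i) :
    (1 - q ^ i) * gg q L i = 1 := by
  unfold gg
  simp only [pow_mul]
  rw [mul_neg_geom_sum, ← pow_mul, pw0 hq (by nlinarith)]; simp

lemma HH_succ {q : R} {L : ℕ} (hq : q ^ L = 0) {s : ℕ} (hs : 1 ≤ s) (a : ℕ) :
    (1 - q ^ (s * (a + 1))) * HH q L s (a + 1) = HH q L s a := by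
  unfold HH
  rw [prod_range_succ, mul_left_comm, gg_mul hq (by nlinarith), mul_one]

lemma EE_step {q : R} {L : ℕ} (hq : q ^ L = 0) (x : R) {s : ℕ} (hs : 1 ≤ s) {k : ℕ} (hk : 1 ≤ k) :
    EE q L x s (k + s) = (1 - x * q ^ k) * EE q L x s k := by
  have key : EE q L x s k - EE q L x s (k + s) = x * q ^ k * EE q L x s k := by
    have h1 := sum_range_succ (fun a => x ^ a * q ^ (k * a) * (1 - q ^ (s * a)) * HH q L s a) L
    have h2 := sum_range_succ' (fun a => x ^ a * q ^ (k * a) * (1 - q ^ (s * a)) * HH q L s a) L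
    have h3 : q ^ (k * L) = 0 := pw0 hq (by nlinarith)
    simp only [h3, mul_zero, zero_mul, add_zero, pow_zero, sub_self] at h1 h2
    unfold EE
    rw [← sum_sub_distrib, mul_sum]
    trans ∑ a ∈ range L, x ^ a * q ^ (k * a) * (1 - q ^ (s * a)) * HH q L s a
    · apply sum_congr rfl
      intro a _
      rw [add_mul, pow_add]; ring
    · rw [← h1, h2]
      apply sum_congr rfl
      intro a _
      rw [mul_assoc, HH_succ hq hs]; ring
  linear_combination -key

lemma EE_big {q : R} {L : ℕ} (hq : q ^ L = 0) (hL : 1 ≤ L) (x : R) (s : ℕ) {k : ℕ} (hk : L ≤ k) :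
    EE q L x s k = 1 := by
  unfold EE
  rw [sum_eq_single 0]
  · simp [HH]
  · intro b _ hb
    rw [pw0 hq (by have : 1 ≤ b := by omega
                   nlinarith)]; simp
  · intro h; simp at h; omega

lemma EE_mul_Pr {q : R} {L : ℕ} (hq : q ^ L = 0) (hL : 1 ≤ L) (x : R) {s : ℕ} (hs : 1 ≤ s)
    {k : ℕ} (hk : 1 ≤ k) : EE q L x s k * Pr q L x s k = 1 := by
  by_cases h : L ≤ k
  · rw [EE_big hq hL _ _ h, Pr_big hq _ _ h, one_mul]
  · have ih := EE_mul_Pr hq hL x hs (k := k + s) (by omega)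
    rw [EE_step hq x hs hk] at ih
    rw [Pr_step hq x hs]
    linear_combination ih
termination_by L - k

lemma Pr_HH {q : R} {L : ℕ} (hq : q ^ L = 0) (a : ℕ) :
    Pr q L 1 3 3 * HH q L 3 a = Pr q L 1 3 (3 * a + 3) := by
  induction a with
  | zero => simp [HH]
  | succ a ih =>
    rw [← HH_succ hq (by norm_num), Pr_step hq 1 (by norm_num) (3 * a + 3)] at ih
    have hg := gg_mul hq (i := 3 * (a + 1)) (by omega)
    have e : HH q L 3 (a + 1) = HH q L 3 a * gg q L (3 * (a + 1)) := by
      unfold HH; rw [prod_range_succ]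
    have e0 := HH_succ hq (show 1 ≤ 3 by norm_num) a
    rw [show 3 * (a + 1) + 3 = 3 * a + 3 + 3 by ring]
    rw [show 3 * (a + 1) = 3 * a + 3 by ring] at *
    linear_combination gg q L (3 * a + 3) * ih + (Pr q L 1 3 (3 * a + 3 + 3) - Pr q L 1 3 3 * HH q L 3 (a+1)) * hg

/-- the weighted sum -/
def DD (q : R) (L : ℕ) (x : R) : R :=
  ∑ r ∈ range L, x ^ r * (q ^ r * HH q L 1 r * Pr q L 1 3 3 * EE q L 1 3 (r + 3))

lemma DD_eq {q : R} {L : ℕ} (hq : q ^ L = 0) (x : R) :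
    DD q L x = ∑ a ∈ range L, q ^ (3 * a) * (Pr q L 1 3 (3 * a + 3) * EE q L x 1 (a + 1)) := by
  unfold DD
  simp only [← Pr_HH hq]
  unfold EE
  simp only [mul_sum]
  rw [sum_comm]
  refine sum_congr rfl fun a _ => sum_congr rfl fun r _ => ?_
  simp only [one_pow, one_mul]
  ring

lemma DD_one {q : R} {L : ℕ} (hq : q ^ L = 0) (hL : 1 ≤ L) :
    DD q L 1 = ∑ a ∈ range L, q ^ (3 * a) *
      ∏ i ∈ range L, (1 + q ^ (a + 1 + i) + q ^ (2 * (a + 1 + i))) := by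
  rw [DD_eq hq]
  refine sum_congr rfl fun a _ => ?_
  congr 1
  have h1 : (∏ i ∈ range L, (1 + q ^ (a + 1 + i) + q ^ (2 * (a + 1 + i)))) * Pr q L 1 1 (a + 1)
      = Pr q L 1 3 (3 * a + 3) := by
    unfold Pr
    rw [← prod_mul_distrib]
    refine prod_congr rfl fun i _ => ?_
    rw [show 3 * a + 3 + 3 * i = (a + 1 + i) * 3 by ring, mul_comm 2, pow_mul, pow_mul, one_mul i]
    ring
  rw [← h1, mul_assoc, mul_comm (Pr _ _ _ _ _), EE_mul_Pr hq hL 1 le_rfl (by omega), mul_one]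

lemma DD_omega {q : R} {L : ℕ} (hq : q ^ L = 0) (hL : 1 ≤ L) {w : R} (hw : 1 + w + w ^ 2 = 0) :
    DD q L w = ∑ a ∈ range L, q ^ (3 * a) * (Pr q L 1 1 (a + 1) * Pr q L (w ^ 2) 1 (a + 1)) := by
  rw [DD_eq hq]
  refine sum_congr rfl fun a _ => ?_
  congr 1
  have h1 : Pr q L w 1 (a + 1) * (Pr q L 1 1 (a + 1) * Pr q L (w ^ 2) 1 (a + 1))
      = Pr q L 1 3 (3 * a + 3) := by
    unfold Pr
    rw [← prod_mul_distrib, ← prod_mul_distrib]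
    refine prod_congr rfl fun i _ => ?_
    rw [show 3 * a + 3 + 3 * i = (a + 1 + 1 * i) * 3 by ring, pow_mul]
    generalize q ^ (a + 1 + 1 * i) = y
    have h3 : w ^ 3 = 1 := by linear_combination (w - 1) * hw
    linear_combination (-y + y ^ 2 * w) * hw + (- y ^ 3) * h3
  have := EE_mul_Pr hq hL w (le_refl 1) (k := a + 1) (by omega)
  rw [← h1]
  linear_combination (Pr q L 1 1 (a + 1) * Pr q L (w ^ 2) 1 (a + 1)) * this

/-- partial theta -/
lemma theta_aux {q : R} {L : ℕ} (hq : q ^ L = 0) (x : R) (c : ℕ) :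
    ∑ a ∈ range L, q ^ a * (Pr q L 1 1 (a + 1) * Pr q L x 1 (a + c)) =
    1 - x * q ^ c * ∑ a ∈ range L, q ^ a * (Pr q L 1 1 (a + 1) * Pr q L x 1 (a + (c + 1))) := by
  have h := sum_range_sub (fun a => Pr q L 1 1 a * Pr q L x 1 (a + c)) L
  simp only [Pr_big hq _ _ (le_refl L), Pr_big hq _ _ (show L ≤ L + c by omega)] at h
  have h0 : Pr q L 1 1 0 = 0 := by rw [Pr_step hq _ le_rfl]; simp
  rw [h0] at h
  simp only [zero_mul, sub_zero, mul_one] at h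
  rw [eq_sub_iff_add_eq, mul_sum, ← sum_add_distrib]
  refine Eq.trans (sum_congr rfl fun a _ => ?_) h
  rw [Pr_step hq 1 le_rfl a, Pr_step hq x le_rfl (a + c), show a + 1 + c = a + c + 1 by ring,
    ← add_assoc, pow_add]
  ring

lemma theta_eq {q : R} {L : ℕ} (hq : q ^ L = 0) (x : R) (N : ℕ) :
    ∑ a ∈ range L, q ^ a * (Pr q L 1 1 (a + 1) * Pr q L x 1 (a + 1)) =
    (∑ k ∈ range N, (-x) ^ k * q ^ (k * (k + 1) / 2)) + (-x) ^ N * q ^ (N * (N + 1) / 2) *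
      ∑ a ∈ range L, q ^ a * (Pr q L 1 1 (a + 1) * Pr q L x 1 (a + (N + 1))) := by
  induction N with
  | zero => simp
  | succ N ih =>
    rw [ih, theta_aux hq, sum_range_succ]
    have : (N + 1) * (N + 1 + 1) / 2 = N * (N + 1) / 2 + (N + 1) := by
      rw [show (N + 1) * (N + 1 + 1) = N * (N + 1) + (N + 1) * 2 by ring]
      exact Nat.add_mul_div_right _ _ (by norm_num)
    rw [this, pow_add q (N * (N + 1) / 2), pow_succ (-x)]
    ring

lemma tri_sum {q : R} {L : ℕ} (hq : q ^ L = 0) (hL : 1 ≤ L) {w : R} (hw : 1 + w + w ^ 2 = 0) :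
    ∑ a ∈ range L, q ^ (3 * a) * (Pr q L 1 1 (a + 1) * Pr q L w 1 (a + 1)) =
    1 + w ^ 2 * ∑ k ∈ range L, (-w) ^ k * q ^ (k * (k + 1) / 2 + 1) := by
  have ht := theta_eq hq w L
  rw [pw0 hq (k := L * (L + 1) / 2) (by
    rw [Nat.le_div_iff_mul_le (by norm_num)]; nlinarith)] at ht
  simp only [mul_zero, zero_mul, add_zero] at ht
  have h5 : ∑ k ∈ range L, (-w) ^ k * q ^ (k * (k + 1) / 2 + 1) =
      (∑ k ∈ range L, (-w) ^ k * q ^ (k * (k + 1) / 2)) * q := by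
    rw [sum_mul]
    refine sum_congr rfl fun k _ => ?_
    rw [pow_succ, mul_assoc]
  rw [h5, ← ht]
  have h0 : Pr q L 1 1 0 = 0 := by rw [Pr_step hq _ le_rfl]; simp
  have h1 := sum_range_sub (fun a => Pr q L 1 1 a * Pr q L w 1 a) L
  have h2 := sum_range_sub (fun a => q ^ a * (Pr q L 1 1 a * Pr q L w 1 a)) L
  simp only [Pr_big hq _ _ (le_refl L), h0, hq] at h1 h2
  simp only [zero_mul, mul_zero, sub_zero, mul_one] at h1 h2
  have h3 : w ^ 3 = 1 := by linear_combination (w - 1) * hw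
  set S1 := ∑ a ∈ range L, q ^ a * (Pr q L 1 1 (a + 1) * Pr q L w 1 (a + 1)) with hS1
  set S2 := ∑ a ∈ range L, q ^ (2 * a) * (Pr q L 1 1 (a + 1) * Pr q L w 1 (a + 1)) with hS2
  set S3 := ∑ a ∈ range L, q ^ (3 * a) * (Pr q L 1 1 (a + 1) * Pr q L w 1 (a + 1)) with hS3
  have e1 : (1 + w) * S1 - w * S2 = 1 := by
    rw [hS1, hS2, mul_sum, mul_sum, ← sum_sub_distrib]
    refine Eq.trans (sum_congr rfl fun a _ => ?_) h1
    rw [Pr_step hq 1 le_rfl a, Pr_step hq w le_rfl a, mul_comm 2 a, pow_mul]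
    ring
  have e2 : (q - 1) * S1 + (1 + w) * S2 - w * S3 = 0 := by
    rw [hS1, hS2, hS3, mul_sum, mul_sum, mul_sum, ← sum_add_distrib, ← sum_sub_distrib]
    refine Eq.trans (sum_congr rfl fun a _ => ?_) h2
    rw [Pr_step hq 1 le_rfl a, Pr_step hq w le_rfl a, mul_comm 2 a, mul_comm 3 a, pow_mul, pow_mul,
      pow_succ q a]
    ring
  linear_combination e1 - w ^ 2 * e2 - S1 * hw + w * S2 * hw - S3 * h3

lemma sum_three (F : ℕ → R) (L : ℕ) :
    ∑ r ∈ range (3 * L), F r = ∑ j ∈ range L, (F (3 * j) + F (3 * j + 1) + F (3 * j + 2)) := by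
  induction L with
  | zero => simp
  | succ L ih =>
    rw [show 3 * (L + 1) = 3 * L + 1 + 1 + 1 by ring, sum_range_succ, sum_range_succ,
      sum_range_succ, ih, sum_range_succ _ L]
    ring

/-- the term of the generating function of `C` -/
def cc (q : R) (L j : ℕ) : R :=
  (∏ i ∈ range j, (1 + q ^ (i + 1) + q ^ (2 * (i + 1)))) * ∏ i ∈ range (2 * j), gg q L (j + 1 + i)

lemma cc_eq {q : R} {L : ℕ} (hq : q ^ L = 0) (hL : 1 ≤ L) (j : ℕ) :
    HH q L 1 (3 * j) * Pr q L 1 3 3 * EE q L 1 3 (3 * j + 3) = cc q L j := by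
  have h1 := EE_mul_Pr hq hL 1 (show 1 ≤ 3 by norm_num) (k := 3 * j + 3) (by omega)
  have h2 : ∀ j, Pr q L 1 3 3 =
      (∏ i ∈ range j, (1 - q ^ (3 * (i + 1)))) * Pr q L 1 3 (3 * j + 3) := by
    intro j
    induction j with
    | zero => simp
    | succ j ih =>
      rw [ih, Pr_step hq 1 (by norm_num) (3 * j + 3), prod_range_succ,
        show 3 * (j + 1) + 3 = 3 * j + 3 + 3 by ring, show 3 * (j + 1) = 3 * j + 3 by ring]
      ring
  have h3 : HH q L 1 (3 * j) = HH q L 1 j * ∏ i ∈ range (2 * j), gg q L (j + 1 + i) := by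
    unfold HH
    rw [show 3 * j = j + 2 * j by ring, prod_range_add]
    congr 1
    refine prod_congr rfl fun i _ => ?_
    congr 1; ring
  have h4 : (∏ i ∈ range j, (1 - q ^ (3 * (i + 1)))) * HH q L 1 j =
      ∏ i ∈ range j, (1 + q ^ (i + 1) + q ^ (2 * (i + 1))) := by
    unfold HH
    rw [← prod_mul_distrib]
    refine prod_congr rfl fun i _ => ?_
    have := gg_mul hq (i := i + 1) (by omega)
    rw [one_mul, mul_comm 3, mul_comm 2, pow_mul, pow_mul]
    linear_combination (1 + q ^ (i + 1) + (q ^ (i + 1)) ^ 2) * this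
  unfold cc
  rw [h3, h2 j, ← h4]
  linear_combination (HH q L 1 j * (∏ i ∈ range (2 * j), gg q L (j + 1 + i)) *
    (∏ i ∈ range j, (1 - q ^ (3 * (i + 1))))) * h1

lemma main_ring {q : R} {L : ℕ} (hq : q ^ L = 0) (hL : 1 ≤ L) {w : R} (hw : 1 + w + w ^ 2 = 0) :
    3 * ∑ j ∈ range L, q ^ (3 * j) * cc q L j =
    (∑ a ∈ range L, q ^ (3 * a) *
      ∏ i ∈ range L, (1 + q ^ (a + 1 + i) + q ^ (2 * (a + 1 + i)))) +
    (2 + ∑ k ∈ range L, (w * (-w ^ 2) ^ k + w ^ 2 * (-w) ^ k) * q ^ (k * (k + 1) / 2 + 1)) := by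
  have h3 : w ^ 3 = 1 := by linear_combination (w - 1) * hw
  have hw2 : 1 + w ^ 2 + (w ^ 2) ^ 2 = 0 := by linear_combination hw + w * h3
  have d0 := DD_one hq hL
  have d1 := DD_omega hq hL hw
  have d2 := DD_omega hq hL hw2
  rw [tri_sum hq hL hw2] at d1
  rw [show (w ^ 2) ^ 2 = w by linear_combination w * h3] at d1 d2
  rw [tri_sum hq hL hw] at d2
  have hs : DD q L 1 + DD q L w + DD q L (w ^ 2) = 3 * ∑ j ∈ range L, q ^ (3 * j) * cc q L j := by
    have ext : ∀ x, DD q L x = ∑ r ∈ range (3 * L),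
        x ^ r * (q ^ r * HH q L 1 r * Pr q L 1 3 3 * EE q L 1 3 (r + 3)) := by
      intro x
      unfold DD
      apply sum_subset
      · intro i; simp only [mem_range]; omega
      · intro i _ hi
        rw [pw0 hq (by simpa using hi)]; ring
    rw [ext, ext, ext, ← sum_add_distrib, ← sum_add_distrib, sum_three, mul_sum]
    refine sum_congr rfl fun j _ => ?_
    rw [← cc_eq hq hL]
    have p0 : w ^ (3 * j) = 1 := by rw [pow_mul, h3, one_pow]
    have p2 : (w ^ 2) ^ (3 * j) = 1 := by rw [← pow_mul, mul_comm, pow_mul, p0, one_pow]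
    simp only [pow_add _ (3 * j), p0, p2, one_pow, one_mul, pow_one]
    generalize HH q L 1 (3 * j + 1) = u1
    generalize HH q L 1 (3 * j + 2) = u2
    generalize EE q L 1 3 (3 * j + 1 + 3) = u3
    generalize EE q L 1 3 (3 * j + 2 + 3) = u4
    linear_combination (q ^ (3 * j) * q * u1 * Pr q L 1 3 3 * u3) * hw +
      (q ^ (3 * j) * q ^ 2 * u2 * Pr q L 1 3 3 * u4) * hw2
  simp only [add_mul, sum_add_distrib]
  simp only [mul_assoc, ← mul_sum]
  rw [← hs, d0, d1, d2]
  ring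

end ringside

lemma count_finset (F : Finset ℕ) (A : ℕ → Finset ℕ) (n : ℕ) :
    ∃ S : Finset (Multiset ℕ), (∀ s, s ∈ S ↔ s.sum = n ∧ (∀ i ∈ s, i ∈ F) ∧
      ∀ i ∈ F, s.count i ∈ A i) ∧
      (S.card : ℂ) = (∏ i ∈ F, ∑ m ∈ A i, (Polynomial.X : Polynomial ℂ) ^ (i * m)).coeff n := by
  classical
  let T := (Fintype.piFinset (fun i : F => A i)).filter (fun f => ∑ i : F, (i : ℕ) * f i = n)
  let φ : (F → ℕ) → Multiset ℕ := fun f => ∑ i : F, Multiset.replicate (f i) (i : ℕ)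
  have hc : ∀ f (i : F), (φ f).count (i : ℕ) = f i := by
    intro f i
    simp only [φ, Multiset.count_sum', Multiset.count_replicate]
    rw [sum_eq_single i]
    · simp
    · intro b _ hb
      rw [if_neg]
      intro h; exact hb (Subtype.ext h)
    · simp
  have hm : ∀ f i, i ∈ φ f → i ∈ F := by
    intro f i hi
    simp only [φ, Multiset.mem_sum] at hi
    obtain ⟨j, _, hj⟩ := hi
    rw [Multiset.eq_of_mem_replicate hj]; exact j.2
  have hsum : ∀ f, (φ f).sum = ∑ i : F, (i : ℕ) * f i := by
    intro f
    simp only [φ]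
    rw [← Multiset.coe_sumAddMonoidHom, map_sum]
    simp [mul_comm]
  have hinv : ∀ s : Multiset ℕ, (∀ i ∈ s, i ∈ F) → φ (fun i => s.count (i : ℕ)) = s := by
    intro s hs
    ext i
    by_cases hi : i ∈ F
    · exact hc _ ⟨i, hi⟩
    · rw [Multiset.count_eq_zero_of_notMem (fun h => hi (hm _ _ h)),
        Multiset.count_eq_zero_of_notMem (fun h => hi (hs _ h))]
  refine ⟨T.image φ, ?_, ?_⟩
  · intro s
    simp only [mem_image, T, mem_filter, Fintype.mem_piFinset]
    constructor
    · rintro ⟨f, ⟨h1, h2⟩, rfl⟩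
      refine ⟨by rw [hsum, h2], hm f, fun i hi => ?_⟩
      have := hc f ⟨i, hi⟩
      simp only at this
      rw [this]; exact h1 _
    · rintro ⟨h1, h2, h3⟩
      refine ⟨fun i => s.count (i : ℕ), ⟨fun i => h3 _ i.2, ?_⟩, hinv s h2⟩
      rw [← hsum, hinv s h2, h1]
  · rw [card_image_of_injective]
    · rw [← prod_coe_sort F, prod_univ_sum]
      simp only [prod_pow_eq_pow_sum, Polynomial.finsetSum_coeff, Polynomial.coeff_X_pow]
      rw [sum_boole]
      simp only [T, eq_comm]
    · intro f g hfg
      funext i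
      rw [← hc f i, ← hc g i, hfg]

lemma count_mul_le (s : Multiset ℕ) (i : ℕ) : s.count i * i ≤ s.sum := by
  classical
  by_cases hi : i ∈ s
  · rw [Finset.sum_multiset_count]
    have := single_le_sum (f := fun m => s.count m • m) (fun _ _ => Nat.zero_le _)
      (Multiset.mem_toFinset.2 hi)
    simpa using this
  · rw [Multiset.count_eq_zero_of_notMem hi]; simp

def AC (n j i : ℕ) : Finset ℕ :=
  if i ≤ j then range 3 else if i = 3 * j then Icc 1 n else range (n + 1)

def AD (a i : ℕ) : Finset ℕ := if i = a then {3} else range 3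

open Polynomial in
noncomputable def pC (n j : ℕ) : ℂ[X] := ∏ i ∈ Ico 1 (3 * j + 1), ∑ m ∈ AC n j i, X ^ (i * m)

open Polynomial in
noncomputable def pD (n a : ℕ) : ℂ[X] := ∏ i ∈ Ico a (a + 1 + (n + 1)), ∑ m ∈ AD a i, X ^ (i * m)

lemma Cm_coeff (n : ℕ) (hn : 0 < n) : (Cm 3 n : ℂ) = (∑ j ∈ Icc 1 n, pC n j).coeff n := by
  classical
  choose S hS hcard using fun j => count_finset (Ico 1 (3 * j + 1)) (AC n j) n
  have hmem : ∀ s : Multiset ℕ, ∀ j, 1 ≤ j → s.sum = n → (s ∈ S j ↔ (∀ a ∈ s, 0 < a) ∧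
      3 * j ∈ s ∧ (∀ b ∈ s, b ≤ 3 * j) ∧ ∀ b ∈ s, b ≤ j → s.count b < 3) := by
    intro s j hj hs
    rw [hS]
    constructor
    · rintro ⟨_, h2, h3⟩
      refine ⟨fun a ha => ?_, ?_, fun b hb => ?_, fun b hb hbj => ?_⟩
      · have := h2 a ha
        simp only [mem_Ico] at this; omega
      · have := h3 (3 * j) (by simp only [mem_Ico]; omega)
        rw [AC, if_neg (by omega), if_pos rfl, mem_Icc] at this
        exact Multiset.count_pos.1 (by omega)
      · have := h2 b hb
        simp only [mem_Ico] at this; omega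
      · have := h3 b (h2 b hb)
        rw [AC, if_pos hbj, mem_range] at this
        exact this
    · rintro ⟨h1, h2, h3, h4⟩
      refine ⟨hs, fun i hi => ?_, fun i hi => ?_⟩
      · have := h1 i hi
        have := h3 i hi
        simp only [mem_Ico]; omega
      · simp only [mem_Ico] at hi
        have hle := count_mul_le s i
        have hle2 : s.count i ≤ n := by nlinarith
        unfold AC
        split_ifs with c1 c2
        · rw [mem_range]
          by_cases hm : i ∈ s
          · exact h4 i hm c1
          · rw [Multiset.count_eq_zero_of_notMem hm]; norm_num
        · rw [mem_Icc]
          subst c2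
          exact ⟨Multiset.count_pos.2 h2, hle2⟩
        · rw [mem_range]; omega
  have hC : Cm 3 n = ((Icc 1 n).biUnion S).card := by
    unfold Cm
    rw [if_neg (by omega)]
    apply Nat.subtype_card
    intro s
    rw [mem_biUnion]
    constructor
    · rintro ⟨j, hj, hsj⟩
      have hs := ((hS j s).1 hsj).1
      rw [mem_Icc] at hj
      obtain ⟨h1, h2⟩ := (hmem s j hj.1 hs).1 hsj
      exact ⟨hs, h1, j, h2⟩
    · rintro ⟨hs, h1, j, h2⟩
      have hp := h1 _ h2.1
      have hle := Multiset.single_le_sum (fun x _ => Nat.zero_le x) _ h2.1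
      refine ⟨j, by rw [mem_Icc]; omega, (hmem s j (by omega) hs).2 ⟨h1, h2⟩⟩
  rw [hC, card_biUnion, Nat.cast_sum, Polynomial.finsetSum_coeff]
  · exact sum_congr rfl fun j _ => hcard j
  · intro i hi j hj hij
    rw [Function.onFun, disjoint_left]
    intro s h1 h2
    have hs := ((hS _ s).1 h1).1
    simp only [coe_Icc, Set.mem_Icc, mem_Icc] at hi hj
    rw [hmem s i hi.1 hs] at h1
    rw [hmem s j hj.1 hs] at h2
    have := h1.2.2.1 _ h2.2.1
    have := h2.2.2.1 _ h1.2.1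
    omega

lemma Dm_coeff (n : ℕ) : (Dm 3 n : ℂ) = (∑ a ∈ range (n + 1), pD n a).coeff n := by
  classical
  choose S hS hcard using fun a => count_finset (Ico a (a + 1 + (n + 1))) (AD a) n
  have hmem : ∀ s : Multiset ℕ, ∀ a, s.sum = n → (s ∈ S a ↔ a ∈ s ∧
      s.count a = 3 ∧ (∀ b ∈ s, a ≤ b) ∧ ∀ b ∈ s, b ≠ a → s.count b < 3) := by
    intro s a hs
    rw [hS]
    constructor
    · rintro ⟨_, h2, h3⟩
      have h4 : s.count a = 3 := by
        have := h3 a (by simp only [mem_Ico]; omega)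
        rw [AD, if_pos rfl, mem_singleton] at this
        exact this
      refine ⟨Multiset.count_pos.1 (by omega), h4, fun b hb => ?_, fun b hb hbj => ?_⟩
      · have := h2 b hb
        simp only [mem_Ico] at this; omega
      · have := h3 b (h2 b hb)
        rw [AD, if_neg hbj, mem_range] at this
        exact this
    · rintro ⟨h1, h2, h3, h4⟩
      refine ⟨hs, fun i hi => ?_, fun i hi => ?_⟩
      · have := h3 i hi
        have hle := Multiset.single_le_sum (fun x _ => Nat.zero_le x) _ hi
        simp only [mem_Ico]; omega
      · unfold AD
        split_ifs with c1
        · rw [c1, h2]; simp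
        · rw [mem_range]
          by_cases hm : i ∈ s
          · exact h4 i hm c1
          · rw [Multiset.count_eq_zero_of_notMem hm]; norm_num
  have hC : Dm 3 n = ((range (n + 1)).biUnion S).card := by
    unfold Dm
    apply Nat.subtype_card
    intro s
    rw [mem_biUnion]
    constructor
    · rintro ⟨j, hj, hsj⟩
      have hs := ((hS j s).1 hsj).1
      exact ⟨hs, j, (hmem s j hs).1 hsj⟩
    · rintro ⟨hs, j, h2⟩
      have hle := Multiset.single_le_sum (fun x _ => Nat.zero_le x) _ h2.1
      refine ⟨j, by rw [mem_range]; omega, (hmem s j hs).2 h2⟩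
  rw [hC, card_biUnion, Nat.cast_sum, Polynomial.finsetSum_coeff]
  · exact sum_congr rfl fun j _ => hcard j
  · intro i hi j hj hij
    rw [Function.onFun, disjoint_left]
    intro s h1 h2
    have hs := ((hS _ s).1 h1).1
    rw [hmem s i hs] at h1
    rw [hmem s j hs] at h2
    have := h1.2.2.1 _ h2.1
    have := h2.2.2.1 _ h1.1
    omega

lemma map_pC {R : Type*} [CommRing R] (φ : Polynomial ℂ →+* R) (n j : ℕ) (hj : 1 ≤ j)
    (hq : φ Polynomial.X ^ (n + 1) = 0) :
    φ (pC n j) = φ Polynomial.X ^ (3 * j) * cc (φ Polynomial.X) (n + 1) j := by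
  set q := φ Polynomial.X with hqd
  unfold pC
  simp only [map_prod, map_sum, map_pow, ← hqd]
  rw [← prod_Ico_consecutive _ (show 1 ≤ j + 1 by omega) (show j + 1 ≤ 3 * j + 1 by omega)]
  unfold cc
  rw [mul_left_comm]
  congr 1
  · rw [prod_Ico_eq_prod_range]
    refine prod_congr rfl fun i hi => ?_
    rw [mem_range] at hi
    rw [AC, if_pos (by omega)]
    simp only [sum_range_succ, sum_range_zero]
    rw [add_comm 1 i, mul_comm 2]; simp
  · rw [prod_Ico_succ_top (by omega)]
    have hr : ∏ i ∈ range (2 * j), gg q (n + 1) (j + 1 + i) =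
        ∏ i ∈ Ico (j + 1) (3 * j + 1), gg q (n + 1) i := by
      rw [prod_Ico_eq_prod_range, show 3 * j + 1 - (j + 1) = 2 * j by omega]
    rw [hr, prod_Ico_succ_top (by omega), mul_left_comm]
    congr 1
    · refine prod_congr rfl fun i hi => ?_
      rw [mem_Ico] at hi
      rw [AC, if_neg (by omega), if_neg (by omega), gg]
    · rw [AC, if_neg (by omega), if_pos rfl, gg, mul_sum]
      have h1 := sum_range_succ' (fun m => q ^ (3 * j * m)) (n + 1)
      have h2 := sum_range_succ (fun m => q ^ (3 * j * m)) (n + 1)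
      have h4 := sum_range_succ' (fun m => q ^ (3 * j * m)) n
      rw [pw0 hq (k := 3 * j * (n + 1)) (by nlinarith)] at h2
      have h5 : ∑ m ∈ Icc 1 n, q ^ (3 * j * m) = ∑ m ∈ range n, q ^ (3 * j * (m + 1)) := by
        rw [← Ico_add_one_right_eq_Icc, sum_Ico_eq_sum_range]
        simp [add_comm]
      have h6 : ∑ m ∈ range (n + 1), q ^ (3 * j) * q ^ (3 * j * m) =
          ∑ m ∈ range (n + 1), q ^ (3 * j * (m + 1)) := by
        refine sum_congr rfl fun m _ => ?_
        rw [← pow_add]; congr 1; ring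
      rw [h5, h6]
      linear_combination h1 - h2 - h4

lemma map_pD {R : Type*} [CommRing R] (φ : Polynomial ℂ →+* R) (n a : ℕ) :
    φ (pD n a) = φ Polynomial.X ^ (3 * a) * ∏ i ∈ range (n + 1),
      (1 + φ Polynomial.X ^ (a + 1 + i) + φ Polynomial.X ^ (2 * (a + 1 + i))) := by
  set q := φ Polynomial.X with hqd
  unfold pD
  simp only [map_prod, map_sum, map_pow, ← hqd]
  rw [prod_eq_prod_Ico_succ_bot (by omega)]
  congr 1
  · simp [AD, mul_comm]
  · rw [prod_Ico_eq_prod_range, show a + 1 + (n + 1) - (a + 1) = n + 1 by omega]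
    refine prod_congr rfl fun i hi => ?_
    rw [AD, if_neg (by omega)]
    simp only [sum_range_succ, sum_range_zero]
    rw [mul_comm 2]; simp

/-- Theorem 1.6: if `n ≥ 1` is not a triangular number plus one, then `3·C₃(n) = D₃(n)`. -/
theorem three_C3_eq_D3 (n : ℕ) (hn : 0 < n)
    (h : ¬ ∃ k : ℕ, n = k * (k + 1) / 2 + 1) :
    3 * Cm 3 n = Dm 3 n := by
  obtain ⟨w, hw⟩ : ∃ w : ℂ, 1 + w + w ^ 2 = 0 := by
    have hp := Complex.isPrimitiveRoot_exp 3 (by norm_num)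
    have := hp.geom_sum_eq_zero (by norm_num)
    refine ⟨Complex.exp (2 * Real.pi * Complex.I / (3 : ℕ)), ?_⟩
    simpa only [sum_range_succ, sum_range_zero, zero_add, pow_zero, pow_one] using this
  let I : Ideal (Polynomial ℂ) := Ideal.span {Polynomial.X ^ (n + 1)}
  let φ := Ideal.Quotient.mk I
  have hq : φ Polynomial.X ^ (n + 1) = 0 := by
    rw [← map_pow]
    exact Ideal.Quotient.eq_zero_iff_mem.2 (Ideal.mem_span_singleton_self _)
  have hw' : 1 + φ (Polynomial.C w) + φ (Polynomial.C w) ^ 2 = 0 := by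
    rw [← map_pow, ← map_one φ, ← map_add, ← map_add, ← Polynomial.C_pow, ← Polynomial.C_1,
      ← Polynomial.C_add, ← Polynomial.C_add, hw, Polynomial.C_0, map_zero]
  have key := main_ring hq (by omega) hw'
  rw [range_eq_Ico, sum_eq_sum_Ico_succ_bot (by omega)] at key
  simp only [← range_eq_Ico] at key
  have e1 : ∑ j ∈ Ico (0 + 1) (n + 1), φ Polynomial.X ^ (3 * j) * cc (φ Polynomial.X) (n + 1) j
      = φ (∑ j ∈ Icc 1 n, pC n j) := by
    rw [map_sum]
    refine sum_congr (by ext; simp) fun j hj => ?_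
    rw [mem_Icc] at hj
    rw [map_pC φ n j hj.1 hq]
  have e2 : (∑ a ∈ range (n + 1), φ Polynomial.X ^ (3 * a) * ∏ i ∈ range (n + 1),
      (1 + φ Polynomial.X ^ (a + 1 + i) + φ Polynomial.X ^ (2 * (a + 1 + i))))
      = φ (∑ a ∈ range (n + 1), pD n a) := by
    rw [map_sum]
    refine sum_congr rfl fun j hj => ?_
    rw [map_pD φ n j]
  have e3 : cc (φ Polynomial.X) (n + 1) 0 = 1 := by simp [cc]
  rw [e1, e2, e3] at key
  let T : Polynomial ℂ := ∑ k ∈ range (n + 1), Polynomial.C (w * (-w ^ 2) ^ k + w ^ 2 * (-w) ^ k) *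
    Polynomial.X ^ (k * (k + 1) / 2 + 1)
  have e4 : φ T = ∑ k ∈ range (n + 1), (φ (Polynomial.C w) * (-φ (Polynomial.C w) ^ 2) ^ k +
      φ (Polynomial.C w) ^ 2 * (-φ (Polynomial.C w)) ^ k) *
        φ Polynomial.X ^ (k * (k + 1) / 2 + 1) := by
    simp only [T, map_sum, map_mul, map_pow, map_add, map_neg]
  rw [← e4] at key
  have hz : φ (3 * (∑ j ∈ Icc 1 n, pC n j) + 1 - (∑ a ∈ range (n + 1), pD n a) - T) = 0 := by
    simp only [map_sub, map_add, map_mul, map_one, map_ofNat]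
    simp only [mul_zero, pow_zero, one_mul] at key
    linear_combination key
  rw [Ideal.Quotient.eq_zero_iff_mem, Ideal.mem_span_singleton, Polynomial.X_pow_dvd_iff] at hz
  have hz := hz n (by omega)
  have hT : T.coeff n = 0 := by
    simp only [T, Polynomial.finsetSum_coeff, Polynomial.coeff_C_mul, Polynomial.coeff_X_pow]
    apply sum_eq_zero
    intro k _
    rw [if_neg (fun hk => h ⟨k, hk⟩), mul_zero]
  have h3 : (3 : Polynomial ℂ) = Polynomial.C 3 := rfl
  rw [Polynomial.coeff_sub, Polynomial.coeff_sub, Polynomial.coeff_add, hT, Polynomial.coeff_one,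
    if_neg (by omega), h3, Polynomial.coeff_C_mul, ← Cm_coeff n hn, ← Dm_coeff n] at hz
  have : (3 : ℂ) * Cm 3 n = Dm 3 n := by linear_combination hz
  exact_mod_cast this
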